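/- For every ε > 0, reals λ > λ' > 0, and functional M₁ : (ℕ → ℕ) → ℕ, there exists a functional M₂ : (ℕ → ℕ) → ℕ with the following property: for every probability space (X, B, μ) and every sequence (f_n) of measurable functions on X with 0 ≤ f_n(x) ≤ 1 for all n and x, if for every F : ℕ → ℕ one has μ({x : ∃ m ≤ M₁(F), ∀ n, n' ∈ [m, F(m)], |f_n(x) − f_{n'}(x)| < ε}) > 1 − λ', then for every F : ℕ → ℕ there is an m ≤ M₂(F) such that for every real p ≥ 1 and all n, n' ∈ [m, F(m)], ‖f_n − f_{n'}‖_p < (ε^p + λ)^(1/p), where ‖g‖_p = (∫ |g|^p dμ)^(1/p). -/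

import Mathlib

open MeasureTheory

/-- the set of points where the sequence oscillates by at least `ε` on `[m, K]` -/
def oscSet {X : Type} (ε : ℝ) (f : ℕ → X → ℝ) (m K : ℕ) : Set X :=
  {x | ∃ n ∈ Set.Icc m K, ∃ n' ∈ Set.Icc m K, ε ≤ |f n x - f n' x|}

lemma oscSet_meas {X : Type} [MeasurableSpace X] (ε : ℝ) (f : ℕ → X → ℝ)
    (hf : ∀ n, Measurable (f n)) (m K : ℕ) : MeasurableSet (oscSet ε f m K) := by
  have : oscSet ε f m K = ⋃ n ∈ Set.Icc m K, ⋃ n' ∈ Set.Icc m K,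
      {x | ε ≤ |f n x - f n' x|} := by
    ext x; simp only [oscSet, Set.mem_iUnion, Set.mem_ofPred_eq, exists_prop]
  rw [this]
  refine MeasurableSet.biUnion (Set.to_countable _) fun n _ =>
    MeasurableSet.biUnion (Set.to_countable _) fun n' _ => ?_
  exact measurableSet_le measurable_const ((hf n).sub (hf n')).abs

lemma oscSet_mono {X : Type} (ε : ℝ) (f : ℕ → X → ℝ) {m m' K K' : ℕ} (h : m' ≤ m) (h' : K ≤ K') :
    oscSet ε f m K ⊆ oscSet ε f m' K' := by
  rintro x ⟨n, hn, n', hn', hx⟩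
  exact ⟨n, ⟨h.trans hn.1, hn.2.trans h'⟩, n', ⟨h.trans hn'.1, hn'.2.trans h'⟩, hx⟩

/-- Chebyshev-type step -/
lemma lp_step {X : Type} [MeasurableSpace X] (μ : Measure X) [IsProbabilityMeasure μ]
    (ε lam : ℝ) (hε : 0 < ε) (hlam : 0 < lam) (f : ℕ → X → ℝ) (hf : ∀ n, Measurable (f n))
    (hb : ∀ n x, 0 ≤ f n x ∧ f n x ≤ 1) (m K : ℕ) (h : μ.real (oscSet ε f m K) < lam)
    (p : ℝ) (hp : 1 ≤ p) (n : ℕ) (hn : n ∈ Set.Icc m K) (n' : ℕ) (hn' : n' ∈ Set.Icc m K) :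
    (∫ x, |f n x - f n' x| ^ p ∂μ) ^ (1 / p) < (ε ^ p + lam) ^ (1 / p) := by
  have hp0 : 0 < p := by linarith
  have hm := oscSet_meas ε f hf m K
  apply Real.rpow_lt_rpow
  · exact integral_nonneg fun x => by positivity
  · have hI : Integrable (fun x => ε ^ p + (oscSet ε f m K).indicator (fun _ => (1:ℝ)) x) μ :=
      (integrable_const _).add ((integrable_const _).indicator hm)
    have h1 : ∫ x, |f n x - f n' x| ^ p ∂μ ≤
        ∫ x, (ε ^ p + (oscSet ε f m K).indicator (fun _ => (1:ℝ)) x) ∂μ := by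
      apply integral_mono_of_nonneg
      · exact Filter.Eventually.of_forall fun x => by positivity
      · exact hI
      · refine Filter.Eventually.of_forall fun x => ?_
        have hεp : 0 < ε ^ p := by positivity
        by_cases hx : x ∈ oscSet ε f m K
        · simp only [Set.indicator_of_mem hx]
          have : |f n x - f n' x| ^ p ≤ 1 := by
            apply Real.rpow_le_one (abs_nonneg _) _ hp0.le
            have a := hb n x
            have b := hb n' x
            rw [abs_le]; constructor <;> linarith
          linarith
        · simp only [Set.indicator_of_notMem hx, add_zero]
          apply Real.rpow_le_rpow (abs_nonneg _) _ hp0.le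
          by_contra hc
          exact hx ⟨n, hn, n', hn', (not_le.mp hc).le⟩
    rw [integral_add (integrable_const _) ((integrable_const _).indicator hm),
      integral_indicator_const _ hm] at h1
    simp at h1
    linarith
  · positivity

theorem key (ε lam lam' : ℝ) (h1 : lam' < lam)
    (M₁ : (ℕ → ℕ) → ℕ) (F : ℕ → ℕ) :
    ∃ N : ℕ, ∀ (X : Type) (_ : MeasurableSpace X) (μ : Measure X),
      IsProbabilityMeasure μ → ∀ f : ℕ → X → ℝ, (∀ n, Measurable (f n)) →
      (∀ F : ℕ → ℕ, μ.real (⋂ m ∈ Finset.range (M₁ F + 1), oscSet ε f m (F m)) < lam') →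
      ∃ m ≤ N, μ.real (oscSet ε f m (F m)) < lam := by
  by_contra hcon
  push Not at hcon
  choose X ms μ hμ f hf hyp hbig using hcon
  set a : ℕ → ℕ → ℕ → ℝ := fun k m K => (μ k).real (oscSet ε (f k) m K) with ha
  have ha0 : ∀ k m K, a k m K ∈ Set.Icc (0:ℝ) 1 := fun k m K =>
    ⟨measureReal_nonneg, measureReal_le_one⟩
  let U : Ultrafilter ℕ := Filter.hyperfilter ℕ
  have hlim : ∀ m K, ∃ l ∈ Set.Icc (0:ℝ) 1,
      Filter.Tendsto (fun k => a k m K) (U : Filter ℕ) (nhds l) := by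
    intro m K
    have := (isCompact_Icc (a := (0:ℝ)) (b := 1)).ultrafilter_le_nhds
      (U.map (fun k => a k m K)) (by
        rw [Filter.le_principal_iff]
        exact Filter.mem_map.2 (Filter.univ_mem' fun k => ha0 k m K))
    exact this
  choose l hl hlt using hlim
  set e : ℕ → ℝ := fun m => (lam - lam') / 8 * (1 / 2) ^ m with he
  have hepos : ∀ m, 0 < e m := fun m => by
    have : 0 < lam - lam' := by linarith
    positivity
  have hF' : ∀ m, ∃ K, F m ≤ K ∧ ∀ K', l m K' ≤ l m K + e m := by
    intro m
    have hmono : ∀ K K', K ≤ K' → l m K ≤ l m K' := fun K K' h =>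
      le_of_tendsto_of_tendsto' (hlt m K) (hlt m K') fun k =>
        measureReal_mono (oscSet_mono _ _ le_rfl h)
    have hbdd : BddAbove (Set.range (l m)) := ⟨1, by rintro _ ⟨K, rfl⟩; exact (hl m K).2⟩
    obtain ⟨K, hK⟩ := exists_lt_of_lt_ciSup (show (⨆ K, l m K) - e m < ⨆ K, l m K by
      linarith [hepos m])
    refine ⟨max (F m) K, le_max_left _ _, fun K' => ?_⟩
    have := hmono K _ (le_max_right (F m) K)
    have := le_ciSup hbdd K'
    linarith
  choose F' hFF hF' using hF'
  set M := M₁ F'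
  obtain ⟨K, hK⟩ : ∃ K, ∀ m ∈ Finset.range (M + 1), F' m ≤ K :=
    ⟨(Finset.range (M + 1)).sup F', fun m hm => Finset.le_sup hm⟩
  have hev : ∀ᶠ k in (U : Filter ℕ), ∀ m ∈ Finset.range (M + 1),
      a k m K - a k m (F' m) < 2 * e m := by
    rw [Filter.eventually_all_finset]
    intro m _
    apply ((hlt m K).sub (hlt m (F' m))).eventually_lt_const
    linarith [hF' m K, hepos m]
  have hge : ∀ᶠ k in (U : Filter ℕ), M ≤ k :=
    (Filter.eventually_ge_atTop M).filter_mono (by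
      rw [← Nat.cofinite_eq_atTop]; exact Filter.hyperfilter_le_cofinite)
  obtain ⟨k, hk, hMk⟩ := (hev.and hge).exists
  have hb := hbig k M hMk
  have hy := hyp k F'
  have hsub : oscSet ε (f k) M (F M) ⊆
      (⋂ m ∈ Finset.range (M + 1), oscSet ε (f k) m (F' m)) ∪
      ⋃ m ∈ Finset.range (M + 1), (oscSet ε (f k) m K \ oscSet ε (f k) m (F' m)) := by
    intro x hx
    by_cases hc : ∀ m ∈ Finset.range (M + 1), x ∈ oscSet ε (f k) m (F' m)
    · left; simpa using hc
    · right
      push Not at hc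
      obtain ⟨m, hm, hxm⟩ := hc
      refine Set.mem_biUnion hm ⟨?_, hxm⟩
      refine oscSet_mono ε (f k) ?_ ?_ hx
      · have := Finset.mem_range.1 hm; omega
      · exact (hFF M).trans (hK M (by simp))
  have hmeas := (measureReal_mono (μ := μ k) hsub).trans (measureReal_union_le _ _)
  have hU := measureReal_biUnion_finset_le (μ := μ k) (Finset.range (M + 1))
    (fun m => oscSet ε (f k) m K \ oscSet ε (f k) m (F' m))
  have hS : ∑ m ∈ Finset.range (M + 1),
      (μ k).real (oscSet ε (f k) m K \ oscSet ε (f k) m (F' m)) ≤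
      ∑ m ∈ Finset.range (M + 1), 2 * e m := by
    refine Finset.sum_le_sum fun m hm => ?_
    rw [measureReal_sdiff (oscSet_mono _ _ le_rfl (hK m hm)) (oscSet_meas ε _ (hf k) _ _)]
    exact (hk m hm).le
  have hG : ∑ m ∈ Finset.range (M + 1), 2 * e m ≤ (lam - lam') / 2 := by
    have h2 := sum_geometric_two_le (M + 1)
    have : ∑ m ∈ Finset.range (M + 1), 2 * e m
        = (lam - lam') / 4 * ∑ m ∈ Finset.range (M + 1), (1 / 2 : ℝ) ^ m := by
      rw [Finset.mul_sum]
      exact Finset.sum_congr rfl fun m _ => by simp only [he]; ring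
    rw [this]
    nlinarith
  linarith

theorem stmt_12 (ε lam lam' : ℝ) (hε : 0 < ε) (h1 : lam' < lam) (h2 : 0 < lam')
    (M₁ : (ℕ → ℕ) → ℕ) :
    ∃ M₂ : (ℕ → ℕ) → ℕ, ∀ (X : Type) (_ : MeasurableSpace X) (μ : Measure X),
      IsProbabilityMeasure μ → ∀ f : ℕ → X → ℝ, (∀ n, Measurable (f n)) →
      (∀ n x, 0 ≤ f n x ∧ f n x ≤ 1) →
      (∀ F : ℕ → ℕ,
        (μ {x | ∃ m ≤ M₁ F, ∀ n ∈ Set.Icc m (F m), ∀ n' ∈ Set.Icc m (F m),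
            |f n x - f n' x| < ε}).toReal > 1 - lam') →
      ∀ F : ℕ → ℕ, ∃ m ≤ M₂ F,
        ∀ p : ℝ, 1 ≤ p →
          ∀ n ∈ Set.Icc m (F m), ∀ n' ∈ Set.Icc m (F m),
            (∫ x, |f n x - f n' x| ^ p ∂μ) ^ (1 / p) < (ε ^ p + lam) ^ (1 / p) := by
  choose M₂ hM₂ using key ε lam lam' h1 M₁
  refine ⟨M₂, fun X _ μ hμ f hf hb hyp F => ?_⟩
  obtain ⟨m, hm, hlt⟩ := hM₂ F X _ μ hμ f hf (fun G => by
    have hG := hyp G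
    have hms : MeasurableSet (⋂ m ∈ Finset.range (M₁ G + 1), oscSet ε f m (G m)) :=
      Finset.measurableSet_biInter _ fun m _ => oscSet_meas ε f hf _ _
    have heq : {x | ∃ m ≤ M₁ G, ∀ n ∈ Set.Icc m (G m), ∀ n' ∈ Set.Icc m (G m),
            |f n x - f n' x| < ε} = (⋂ m ∈ Finset.range (M₁ G + 1), oscSet ε f m (G m))ᶜ := by
      ext x
      simp only [Set.mem_ofPred_eq, Set.mem_compl_iff, Set.mem_iInter, Finset.mem_range,
        Nat.lt_succ_iff, oscSet]
      push Not
      rfl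
    rw [heq] at hG
    change μ.real _ > _ at hG
    rw [probReal_compl_eq_one_sub hms] at hG
    linarith)
  exact ⟨m, hm, fun p hp n hn n' hn' =>
    lp_step μ ε lam hε (h2.trans h1) f hf hb m (F m) hlt p hp n hn n' hn'⟩
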